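/- Let 0 ≤ j ≤ d₁−1, fix scalars (λ_u,μ_u) ≠ (0,0) in k² for 0 ≤ u ≤ j, and let (r_i, q_i)_{0 ≤ i ≤ j} be a division system up to level j. Then for all homogeneous polynomials P, L, H ∈ k[X₀,X₁] of degrees d₁−j, j and d₂−d₁+j respectively, the evaluation of r_j at (P·L, P·H) is the zero polynomial. -/

import Mathlib

/-!
If `P` divides `F` and `G` and has no zero at any `(λ_u, μ_u)`, then each division identity,
evaluated at `(F, G)`, passes divisibility by `P` on to the next remainder, as long as the scalar
in front of that remainder is nonzero (`IsRemainderChain.dvd_forward`). For `F = P L`, `G = P H` with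
`deg P = d₁ - j` this makes `P` a divisor of the evaluation of `r_j`, a form of degree
`d₁ - 1 - j`, which must then be zero (`evalFG_eq_zero_of_lead_ne_zero`).

The scalars in question are powers of the values `f(λ₀, μ₀)` and `r_u(λ_{u+1}, μ_{u+1})`, and at
special `(P, L, H)` they may vanish. Since `r_j(P L, P H)` depends polynomially on `(P, L, H)`, it
suffices to find one triple at which none of them vanishes: on the line joining it to the given
triple, all but finitely many points are then covered by the argument above.

Such a triple is built by induction (`exists_good`), with `F` a fixed product of `d₁` distinct
linear forms and the gcd of `F` and `G` losing one linear factor at each step. When the gcd has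
degree `d₁ - n` and the first `n` scalars are nonzero, the next remainder cannot vanish: otherwise
the previous one, of degree `d₁ - n + 1`, would divide both `F` and `G`. Hence it is a nonzero
multiple of the gcd, and its value at `(λ_n, μ_n)` is nonzero (`IsRemainderChain.lead_ne_zero`). Perturbing
`G` generically then lowers the degree of the gcd without destroying these inequalities.
-/

open MvPolynomial

noncomputable section

/-- Variables of the ring `A = k[X₀,X₁,f₀,f₁,…,g₀,g₁,…]`. -/
abbrev Avars : Type := Fin 2 ⊕ ℕ ⊕ ℕ

/-- The weights defining the trigrading of `A` (total degree in the `X`'s, in the `f`'s,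
and in the `g`'s). -/
def wA : Avars → ℕ × ℕ × ℕ
  | Sum.inl _ => (1, 0, 0)
  | Sum.inr (Sum.inl _) => (0, 1, 0)
  | Sum.inr (Sum.inr _) => (0, 0, 1)

variable (k : Type) [Field k]

/-- The variable `Xᵢ` of `A`. -/
def XA (i : Fin 2) : MvPolynomial Avars k := X (Sum.inl i)

/-- The variable `f_j` of `A`. -/
def fA (j : ℕ) : MvPolynomial Avars k := X (Sum.inr (Sum.inl j))

/-- The variable `g_j` of `A`. -/
def gA (j : ℕ) : MvPolynomial Avars k := X (Sum.inr (Sum.inr j))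

/-- The generic binary form `f = ∑_{j=0}^{d₁} f_j X₀^{d₁-j} X₁^j`. -/
def fgen (d₁ : ℕ) : MvPolynomial Avars k :=
  ∑ j ∈ Finset.range (d₁ + 1), fA k j * XA k 0 ^ (d₁ - j) * XA k 1 ^ j

/-- The generic binary form `g = ∑_{j=0}^{d₂} g_j X₀^{d₂-j} X₁^j`. -/
def ggen (d₂ : ℕ) : MvPolynomial Avars k :=
  ∑ j ∈ Finset.range (d₂ + 1), gA k j * XA k 0 ^ (d₂ - j) * XA k 1 ^ j

/-- The linear form `L_{λ,μ} = λ X₁ - μ X₀`. -/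
def Lform (lam mu : k) : MvPolynomial Avars k := C lam * XA k 1 - C mu * XA k 0

/-- Substitution `X₀ ↦ λ`, `X₁ ↦ μ`, leaving the `f` and `g` variables unchanged:
this is `a ↦ a(λ,μ)`. -/
def evalXY (lam mu : k) : MvPolynomial Avars k →ₐ[k] MvPolynomial Avars k :=
  aeval (Sum.elim (fun t : Fin 2 => if t = 0 then C lam else C mu)
    (fun j => X (Sum.inr j)))

/-- A division system up to level `j` for the degrees `(d₁, d₂)` and the scalars
`(lam u, mu u)`: a family `(r_i, q_i)_{0 ≤ i ≤ j}` of trihomogeneous elements of `A`, where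
`r_i` has tridegree `(d₁-1-i, d₂-d₁+1+i, 1+i)`, satisfying the identities
`f(λ₀,μ₀)^{d₂-d₁+1}·g = f·q₀ + L_{λ₀,μ₀}^{d₂-d₁+1}·r₀`;
`r₀(λ₁,μ₁)²·f = r₀·q₁ + f(λ₀,μ₀)^{d₂-d₁+1}·L_{λ₁,μ₁}²·r₁` (if `j ≥ 1`); and
`r_{i-1}(λ_i,μ_i)²·r_{i-2} = r_{i-1}·q_i + r_{i-2}(λ_{i-1},μ_{i-1})²·L_{λ_i,μ_i}²·r_i`
for `2 ≤ i ≤ j`. -/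
def IsDivisionSystem (d₁ d₂ : ℕ) (lam mu : ℕ → k) (j : ℕ)
    (r q : ℕ → MvPolynomial Avars k) : Prop :=
  (∀ i ≤ j, IsWeightedHomogeneous wA (r i) (d₁ - 1 - i, d₂ - d₁ + 1 + i, 1 + i)) ∧
  (∀ i ≤ j, ∃ m : ℕ × ℕ × ℕ, IsWeightedHomogeneous wA (q i) m) ∧
  ((evalXY k (lam 0) (mu 0) (fgen k d₁)) ^ (d₂ - d₁ + 1) * ggen k d₂
    = fgen k d₁ * q 0 + Lform k (lam 0) (mu 0) ^ (d₂ - d₁ + 1) * r 0) ∧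
  (1 ≤ j → (evalXY k (lam 1) (mu 1) (r 0)) ^ 2 * fgen k d₁
    = r 0 * q 1 + (evalXY k (lam 0) (mu 0) (fgen k d₁)) ^ (d₂ - d₁ + 1)
        * Lform k (lam 1) (mu 1) ^ 2 * r 1) ∧
  (∀ i, 2 ≤ i → i ≤ j → (evalXY k (lam i) (mu i) (r (i - 1))) ^ 2 * r (i - 2)
    = r (i - 1) * q i + (evalXY k (lam (i - 1)) (mu (i - 1)) (r (i - 2))) ^ 2
        * Lform k (lam i) (mu i) ^ 2 * r i)

/-- Evaluation of an element of `A` at a pair `(F, G)` of binary forms of degrees `d₁` and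
`d₂`: the `k`-algebra map fixing `X₀, X₁` and sending `f_j` (resp. `g_j`) to the coefficient
of `X₀^{d₁-j}X₁^j` in `F` (resp. of `X₀^{d₂-j}X₁^j` in `G`). -/
def evalFG (d₁ d₂ : ℕ) (F G : MvPolynomial (Fin 2) k) :
    MvPolynomial Avars k →ₐ[k] MvPolynomial (Fin 2) k :=
  aeval (Sum.elim (fun t : Fin 2 => X t)
    (Sum.elim
      (fun j => C (coeff (Finsupp.single 0 (d₁ - j) + Finsupp.single 1 j) F))
      (fun j => C (coeff (Finsupp.single 0 (d₂ - j) + Finsupp.single 1 j) G))))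

/-- The value of a binary form at the point `(λ, μ)`. -/
def evalPt (lam mu : k) (P : MvPolynomial (Fin 2) k) : k :=
  eval (fun t : Fin 2 => if t = 0 then lam else mu) P

section Helpers

open Filter

variable {k}

/-! ### Values at points and linear forms -/

/-- The linear form `a X₁ - b X₀` in `k[X₀, X₁]`, vanishing at the point `(a, b)`. -/
def lin (a b : k) : MvPolynomial (Fin 2) k := C a * X 1 - C b * X 0

lemma evalPt_mul (a b : k) (P Q : MvPolynomial (Fin 2) k) :
    evalPt k a b (P * Q) = evalPt k a b P * evalPt k a b Q := map_mul _ _ _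

lemma evalPt_add (a b : k) (P Q : MvPolynomial (Fin 2) k) :
    evalPt k a b (P + Q) = evalPt k a b P + evalPt k a b Q := map_add _ _ _

lemma evalPt_pow (a b : k) (P : MvPolynomial (Fin 2) k) (n : ℕ) :
    evalPt k a b (P ^ n) = evalPt k a b P ^ n := map_pow _ _ _

lemma evalPt_prod (a b : k) {ι : Type} (S : Finset ι) (P : ι → MvPolynomial (Fin 2) k) :
    evalPt k a b (∏ i ∈ S, P i) = ∏ i ∈ S, evalPt k a b (P i) := map_prod _ _ _

@[simp] lemma evalPt_zero (a b : k) : evalPt k a b 0 = 0 := map_zero _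

@[simp] lemma evalPt_C (a b c : k) : evalPt k a b (C c) = c := eval_C _

@[simp] lemma evalPt_X_zero (a b : k) : evalPt k a b (X 0) = a := by simp [evalPt]

@[simp] lemma evalPt_lin (x y a b : k) : evalPt k x y (lin a b) = a * y - b * x := by
  simp [evalPt, lin]

lemma isHomogeneous_lin (a b : k) : (lin a b).IsHomogeneous 1 :=
  (isHomogeneous_C_mul_X a 1).sub (isHomogeneous_C_mul_X b 0)

lemma coeff_one_lin (a b : k) : coeff (Finsupp.single 1 1) (lin a b) = a := by
  have h : (Finsupp.single (0 : Fin 2) 1 : Fin 2 →₀ ℕ) ≠ Finsupp.single 1 1 := by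
    intro h
    have := DFunLike.congr_fun h 0
    simp at this
  simp [lin, coeff_C_mul, coeff_X, h]

lemma coeff_zero_lin (a b : k) : coeff (Finsupp.single 0 1) (lin a b) = -b := by
  have h : (Finsupp.single (1 : Fin 2) 1 : Fin 2 →₀ ℕ) ≠ Finsupp.single 0 1 := by
    intro h
    have := DFunLike.congr_fun h 0
    simp at this
  simp [lin, coeff_C_mul, coeff_X, h]

lemma lin_irreducible {a b : k} (h : (a, b) ≠ (0, 0)) : Irreducible (lin a b) := by
  have h0 : a ≠ 0 ∨ b ≠ 0 := by
    by_contra! hc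
    exact h (by rw [hc.1, hc.2])
  have hne : lin a b ≠ 0 := by
    intro hz
    have h1 := coeff_one_lin a b
    have h2 := coeff_zero_lin a b
    rw [hz] at h1 h2
    rcases h0 with h0 | h0
    · exact h0 (by simpa using h1.symm)
    · exact h0 (by simpa using h2.symm)
  refine irreducible_of_totalDegree_eq_one ((isHomogeneous_lin a b).totalDegree hne) ?_
  intro x hx
  have h1 := hx (Finsupp.single 1 1)
  have h2 := hx (Finsupp.single 0 1)
  rw [coeff_one_lin] at h1
  rw [coeff_zero_lin] at h2
  rw [isUnit_iff_ne_zero]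
  rintro rfl
  rw [zero_dvd_iff] at h1 h2
  rcases h0 with h0 | h0
  · exact h0 h1
  · exact h0 (neg_eq_zero.mp h2)

lemma lin_not_dvd {a b : k} {P : MvPolynomial (Fin 2) k} (h : evalPt k a b P ≠ 0) :
    ¬ lin a b ∣ P := by
  rintro ⟨Q, rfl⟩
  apply h
  rw [evalPt_mul, evalPt_lin]
  ring

lemma lin_isRelPrime {a b : k} (hab : (a, b) ≠ (0, 0)) {P : MvPolynomial (Fin 2) k}
    (h : evalPt k a b P ≠ 0) : IsRelPrime (lin a b) P :=
  (lin_irreducible hab).isRelPrime_iff_not_dvd.mpr (lin_not_dvd h)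

lemma dvd_of_dvd_C_mul {c : k} (hc : c ≠ 0) {P Q : MvPolynomial (Fin 2) k}
    (h : P ∣ C c * Q) : P ∣ Q := by
  have hu : IsUnit (C c : MvPolynomial (Fin 2) k) := (isUnit_iff_ne_zero.mpr hc).map C
  exact hu.dvd_mul_left.mp h

/-! ### Remainder chains of binary forms -/

/-- The value `R_{n+1}(λ_n, μ_n)`, which controls the `n`-th division of a remainder chain. -/
def lead (lam mu : ℕ → k) (R : ℕ → MvPolynomial (Fin 2) k) (n : ℕ) : k :=
  evalPt k (lam n) (mu n) (R (n + 1))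

/-- A sequence of binary forms `R₀ = G, R₁ = F, R₂, …` obtained by a Euclidean algorithm in which
the `n`-th division reads `c R_n = R_{n+1} Q + c' L_{λ_n,μ_n}^e R_{n+2}`, with `R_{n+1}` zero or of
degree `d₁ - n`. The scalars `c, c'` may vanish, but `c ≠ 0` when `lead n ≠ 0`, and `c' ≠ 0` when `lead u ≠ 0` for all `u < n`. -/
def IsRemainderChain (d₁ j : ℕ) (lam mu : ℕ → k) (R : ℕ → MvPolynomial (Fin 2) k) : Prop :=
  (∀ n ≤ j + 1, (R (n + 1)).IsHomogeneous (d₁ - n)) ∧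
  ∀ n ≤ j, ∃ (c c' : k) (e : ℕ) (Q : MvPolynomial (Fin 2) k),
    C c * R n = R (n + 1) * Q + C c' * lin (lam n) (mu n) ^ e * R (n + 2) ∧
    (lead lam mu R n ≠ 0 → c ≠ 0) ∧ ((∀ u < n, lead lam mu R u ≠ 0) → c' ≠ 0)

/-- Common divisors of `R₀, R₁` that avoid the points `(λ_u, μ_u)` propagate down the chain,
as long as the leads do not vanish. -/
lemma IsRemainderChain.dvd_forward {d₁ j : ℕ} {lam mu : ℕ → k} {R : ℕ → MvPolynomial (Fin 2) k}
    (hR : IsRemainderChain d₁ j lam mu R) (hlm : ∀ u ≤ j, (lam u, mu u) ≠ (0, 0))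
    {P : MvPolynomial (Fin 2) k} (hP : ∀ u ≤ j, evalPt k (lam u) (mu u) P ≠ 0)
    (h0 : P ∣ R 0) (h1 : P ∣ R 1) (n : ℕ) (hn : n ≤ j + 1)
    (hv : ∀ u, u + 1 < n → lead lam mu R u ≠ 0) : P ∣ R n ∧ P ∣ R (n + 1) := by
  induction n with
  | zero => exact ⟨h0, h1⟩
  | succ n ih =>
    obtain ⟨ha, hb⟩ := ih (by omega) (fun u hu => hv u (by omega))
    refine ⟨hb, ?_⟩
    obtain ⟨c, c', e, Q, hrec, -, hc'⟩ := hR.2 n (by omega)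
    have hd : P ∣ C c' * (lin (lam n) (mu n) ^ e * R (n + 2)) := by
      rw [← mul_assoc]
      exact (dvd_add_right (hb.mul_right Q)).mp (hrec ▸ ha.mul_left _)
    have hrel : IsRelPrime P (lin (lam n) (mu n) ^ e) :=
      (lin_isRelPrime (hlm n (by omega)) (hP n (by omega))).symm.pow_right
    exact hrel.dvd_of_dvd_mul_left
      (dvd_of_dvd_C_mul (hc' (fun u hu => hv u (by omega))) hd)

/-- Common divisors of two consecutive members of the chain propagate up to `R₀` and `R₁`,
as long as the leads do not vanish. -/
lemma IsRemainderChain.dvd_backward {d₁ j : ℕ} {lam mu : ℕ → k} {R : ℕ → MvPolynomial (Fin 2) k}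
    (hR : IsRemainderChain d₁ j lam mu R) {D : MvPolynomial (Fin 2) k} (n : ℕ) (hn : n ≤ j + 1)
    (hv : ∀ u < n, lead lam mu R u ≠ 0) (h0 : D ∣ R n) (h1 : D ∣ R (n + 1)) :
    D ∣ R 0 ∧ D ∣ R 1 := by
  induction n with
  | zero => exact ⟨h0, h1⟩
  | succ n ih =>
    refine ih (by omega) (fun u hu => hv u (by omega)) ?_ h0
    obtain ⟨c, c', e, Q, hrec, hc, -⟩ := hR.2 n (by omega)
    refine dvd_of_dvd_C_mul (hc (hv n (by omega))) ?_
    rw [hrec]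
    exact dvd_add (h0.mul_right _) (h1.mul_left _)

/-- If the greatest common divisor `P` of `R₀` and `R₁` has the degree of `R_{n+1}` and the first
`n` leads do not vanish, then `R_{n+1}` is a nonzero scalar multiple of `P`: otherwise
`R_{n+1} = 0` and `R_n` would be a common divisor of too large a degree. -/
lemma IsRemainderChain.lead_ne_zero {d₁ j : ℕ} {lam mu : ℕ → k} {R : ℕ → MvPolynomial (Fin 2) k}
    (hR : IsRemainderChain d₁ j lam mu R) (hlm : ∀ u ≤ j, (lam u, mu u) ≠ (0, 0))
    {n : ℕ} (hn : n ≤ j) (hnd : n ≤ d₁)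
    {P L H : MvPolynomial (Fin 2) k} (hPd : P.IsHomogeneous (d₁ - n))
    (hP : ∀ u ≤ j, evalPt k (lam u) (mu u) P ≠ 0)
    (h0 : R 0 = P * H) (h1 : R 1 = P * L) (hne : R 1 ≠ 0) (hLH : IsRelPrime L H)
    (hv : ∀ u < n, lead lam mu R u ≠ 0) : lead lam mu R n ≠ 0 := by
  have hP0 : P ≠ 0 := by
    rintro rfl
    simp [h1] at hne
  have hPdeg := hPd.totalDegree hP0
  obtain ⟨hPn, hPn1⟩ := hR.dvd_forward hlm hP (h0 ▸ dvd_mul_right _ _) (h1 ▸ dvd_mul_right _ _) n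
    (by omega) (fun u hu => hv u (by omega))
  by_cases hz : R (n + 1) = 0
  · exfalso
    cases n with
    | zero => exact hne hz
    | succ m =>
      have hRm : R (m + 1) ≠ 0 := by
        intro h
        apply hv m (by omega)
        simp [lead, h]
      obtain ⟨hD0, hD1⟩ := hR.dvd_backward (D := R (m + 1)) (m + 1) (by omega) hv dvd_rfl
        (hz ▸ dvd_zero _)
      have hdeg := (hR.1 m (by omega)).totalDegree hRm
      obtain ⟨s, hs⟩ := hPn
      rw [hs, h0] at hD0
      rw [hs, h1] at hD1
      have hsu : IsUnit s := hLH ((mul_dvd_mul_iff_left hP0).mp hD1)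
        ((mul_dvd_mul_iff_left hP0).mp hD0)
      have hle : (R (m + 1)).totalDegree ≤ P.totalDegree := by
        refine totalDegree_le_of_dvd_of_isDomain ?_ hP0
        rw [hs]
        exact (hsu.mul_right_dvd).mpr dvd_rfl
      omega
  · have hdeg := (hR.1 n (by omega)).totalDegree hz
    obtain ⟨s, hs⟩ := hPn1
    have hs0 : s ≠ 0 := by
      rintro rfl
      simp [hs] at hz
    rw [hs, totalDegree_mul_of_isDomain hP0 hs0] at hdeg
    obtain ⟨c, rfl⟩ : ∃ c, s = C c := ⟨_, totalDegree_eq_zero_iff_eq_C.mp (by omega)⟩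
    rw [lead, hs, evalPt_mul, evalPt_C]
    refine mul_ne_zero (hP n hn) ?_
    rintro rfl
    simp at hs0

/-! ### Evaluating a division system at a pair of forms -/

/-- The sequence `g, f, r₀, r₁, …` in `A`. -/
def genSeq (d₁ d₂ : ℕ) (r : ℕ → MvPolynomial Avars k) : ℕ → MvPolynomial Avars k
  | 0 => ggen k d₂
  | 1 => fgen k d₁
  | n + 2 => r n

/-- The evaluation of the sequence `g, f, r₀, r₁, …` at the pair `(F, G)`. -/
def evalSeq (d₁ d₂ : ℕ) (r : ℕ → MvPolynomial Avars k) (F G : MvPolynomial (Fin 2) k)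
    (n : ℕ) : MvPolynomial (Fin 2) k :=
  evalFG k d₁ d₂ F G (genSeq d₁ d₂ r n)

lemma evalFG_evalXY (d₁ d₂ : ℕ) (F G : MvPolynomial (Fin 2) k) (a b : k)
    (x : MvPolynomial Avars k) :
    evalFG k d₁ d₂ F G (evalXY k a b x) = C (evalPt k a b (evalFG k d₁ d₂ F G x)) := by
  induction x using MvPolynomial.induction_on with
  | C c => simp [evalPt, evalXY, evalFG, ← algebraMap_eq]
  | add p q hp hq => simp [hp, hq, evalPt_add]
  | mul_X p v hp =>
    rw [map_mul, map_mul, map_mul, evalPt_mul, hp, C_mul]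
    congr 1
    rcases v with t | v | v
    · fin_cases t <;> simp [evalXY, evalFG, evalPt]
    · simp [evalXY, evalFG]
    · simp [evalXY, evalFG]

lemma evalFG_Lform (d₁ d₂ : ℕ) (F G : MvPolynomial (Fin 2) k) (a b : k) :
    evalFG k d₁ d₂ F G (Lform k a b) = lin a b := by
  simp [evalFG, Lform, lin, XA]

/-- A binary form is the sum of its monomials. -/
lemma eq_sum_of_isHomogeneous {d : ℕ} {F : MvPolynomial (Fin 2) k} (hF : F.IsHomogeneous d) :
    ∑ j ∈ Finset.range (d + 1), C (coeff (Finsupp.single 0 (d - j) + Finsupp.single 1 j) F) *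
      X 0 ^ (d - j) * X 1 ^ j = F := by
  ext m
  have hterm : ∀ j : ℕ, ∀ c : k, (C c * X 0 ^ (d - j) * X 1 ^ j : MvPolynomial (Fin 2) k) =
      monomial (Finsupp.single 0 (d - j) + Finsupp.single 1 j) c := by
    intro j c
    rw [X_pow_eq_monomial, X_pow_eq_monomial, C_mul_monomial, monomial_mul]
    simp
  simp only [hterm, coeff_sum, coeff_monomial]
  have hdeg : m.degree = m 0 + m 1 := by
    rw [Finsupp.degree_eq_sum, Fin.sum_univ_two]
  by_cases hm : m.degree = d
  · rw [Finset.sum_eq_single (m 1)]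
    · have : Finsupp.single 0 (d - m 1) + Finsupp.single 1 (m 1) = m := by
        ext i
        fin_cases i
        · simp; omega
        · simp
      rw [if_pos this, this]
    · intro b _ hb
      rw [if_neg]
      intro h
      apply hb
      rw [← h]
      simp
    · intro h
      simp at h
      omega
  · rw [hF.coeff_eq_zero hm]
    refine Finset.sum_eq_zero fun b hb => if_neg ?_
    intro h
    apply hm
    rw [hdeg, ← h]
    simp at hb ⊢
    omega

lemma evalFG_fgen {d₁ d₂ : ℕ} {F : MvPolynomial (Fin 2) k} (hF : F.IsHomogeneous d₁)
    (G : MvPolynomial (Fin 2) k) : evalFG k d₁ d₂ F G (fgen k d₁) = F := by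
  conv_rhs => rw [← eq_sum_of_isHomogeneous hF]
  simp [evalFG, fgen, fA, XA]

lemma evalFG_ggen {d₁ d₂ : ℕ} {G : MvPolynomial (Fin 2) k} (hG : G.IsHomogeneous d₂)
    (F : MvPolynomial (Fin 2) k) : evalFG k d₁ d₂ F G (ggen k d₂) = G := by
  conv_rhs => rw [← eq_sum_of_isHomogeneous hG]
  simp [evalFG, ggen, gA, XA]

lemma isHomogeneous_evalFG {d₁ d₂ : ℕ} {F G : MvPolynomial (Fin 2) k}
    {x : MvPolynomial Avars k} {m : ℕ × ℕ × ℕ} (hx : IsWeightedHomogeneous wA x m) :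
    (evalFG k d₁ d₂ F G x).IsHomogeneous m.1 := by
  rw [evalFG, aeval_def, eval₂_eq]
  refine IsHomogeneous.sum _ _ _ fun d hd => ?_
  have hw := congrArg Prod.fst (hx (mem_support_iff.mp hd))
  rw [Finsupp.weight_apply, Finsupp.sum, Prod.fst_sum] at hw
  rw [← hw]
  refine IsHomogeneous.C_mul (IsHomogeneous.prod _ _ _ fun v _ => ?_) _
  rcases v with t | v | v
  · simpa [wA] using isHomogeneous_X_pow (R := k) t (d (Sum.inl t))
  · simpa [wA] using (isHomogeneous_C (Fin 2) _).pow _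
  · simpa [wA] using (isHomogeneous_C (Fin 2) _).pow _

/-- Evaluating a division system at a pair of forms gives a remainder chain. -/
lemma isRemainderChain_evalSeq {d₁ d₂ j : ℕ} {lam mu : ℕ → k} {r q : ℕ → MvPolynomial Avars k}
    (hds : IsDivisionSystem k d₁ d₂ lam mu j r q) {F G : MvPolynomial (Fin 2) k}
    (hF : F.IsHomogeneous d₁) (hG : G.IsHomogeneous d₂) :
    IsRemainderChain d₁ j lam mu (evalSeq d₁ d₂ r F G) := by
  obtain ⟨hr, -, hA, hB, hC⟩ := hds
  have h0 : evalSeq d₁ d₂ r F G 0 = G := evalFG_ggen hG F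
  have h1 : evalSeq d₁ d₂ r F G 1 = F := evalFG_fgen hF G
  refine ⟨?_, ?_⟩
  · rintro (_ | n) hn
    · rw [h1]; exact hF
    · have := isHomogeneous_evalFG (d₁ := d₁) (d₂ := d₂) (F := F) (G := G) (hr n (by omega))
      rwa [show d₁ - 1 - n = d₁ - (n + 1) by omega] at this
  · rintro (_ | _ | n) hn
    · refine ⟨_, 1, d₂ - d₁ + 1, evalFG k d₁ d₂ F G (q 0), ?_,
        fun h => pow_ne_zero (d₂ - d₁ + 1) h, fun _ => one_ne_zero⟩
      have := congrArg (evalFG k d₁ d₂ F G) hA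
      simp only [map_mul, map_pow, map_add, evalFG_evalXY, evalFG_Lform] at this
      rw [C_pow, C_1, one_mul]
      exact this
    · refine ⟨_, _, 2, evalFG k d₁ d₂ F G (q 1), ?_,
        fun h => pow_ne_zero 2 h, fun h => pow_ne_zero (d₂ - d₁ + 1) (h 0 (by omega))⟩
      have := congrArg (evalFG k d₁ d₂ F G) (hB hn)
      simp only [map_mul, map_pow, map_add, evalFG_evalXY, evalFG_Lform] at this
      rw [C_pow, C_pow]
      exact this
    · refine ⟨_, _, 2, evalFG k d₁ d₂ F G (q (n + 2)), ?_,
        fun h => pow_ne_zero 2 h, fun h => pow_ne_zero 2 (h (n + 1) (by omega))⟩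
      have := congrArg (evalFG k d₁ d₂ F G) (hC (n + 2) (by omega) hn)
      simp only [map_mul, map_pow, map_add, evalFG_evalXY, evalFG_Lform] at this
      rw [C_pow, C_pow]
      exact this

/-! ### Polynomial one-parameter families -/

/-- A function `k → k` given by a polynomial. -/
def PolyFun (φ : k → k) : Prop := ∃ p : Polynomial k, ∀ s, φ s = p.eval s

/-- A family of polynomials in `X₀, X₁` whose coefficients are polynomials in the parameter. -/
def PolyFam (φ : k → MvPolynomial (Fin 2) k) : Prop :=
  ∃ Φ : MvPolynomial (Fin 2) (Polynomial k), ∀ s, φ s = map (Polynomial.evalRingHom s) Φ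

lemma PolyFam.const (P : MvPolynomial (Fin 2) k) : PolyFam fun _ => P := by
  refine ⟨map Polynomial.C P, fun s => ?_⟩
  have : (Polynomial.evalRingHom s).comp Polynomial.C = RingHom.id k := by ext; simp
  rw [MvPolynomial.map_map, this, MvPolynomial.map_id]

lemma PolyFam.param : PolyFam (fun s : k => C s) := ⟨C Polynomial.X, fun s => by simp⟩

lemma PolyFam.add {φ ψ : k → MvPolynomial (Fin 2) k} (hφ : PolyFam φ) (hψ : PolyFam ψ) :
    PolyFam fun s => φ s + ψ s := by
  obtain ⟨Φ, hΦ⟩ := hφ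
  obtain ⟨Ψ, hΨ⟩ := hψ
  exact ⟨Φ + Ψ, fun s => by simp [hΦ, hΨ]⟩

lemma PolyFam.mul {φ ψ : k → MvPolynomial (Fin 2) k} (hφ : PolyFam φ) (hψ : PolyFam ψ) :
    PolyFam fun s => φ s * ψ s := by
  obtain ⟨Φ, hΦ⟩ := hφ
  obtain ⟨Ψ, hΨ⟩ := hψ
  exact ⟨Φ * Ψ, fun s => by simp [hΦ, hΨ]⟩

lemma PolyFam.evalPt {φ : k → MvPolynomial (Fin 2) k} (hφ : PolyFam φ) (a b : k) :
    PolyFun fun s => evalPt k a b (φ s) := by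
  obtain ⟨Φ, hΦ⟩ := hφ
  refine ⟨eval (fun t : Fin 2 => if t = 0 then Polynomial.C a else Polynomial.C b) Φ,
    fun s => ?_⟩
  simp only [hΦ, _root_.evalPt]
  clear hΦ
  induction Φ using MvPolynomial.induction_on with
  | C c => simp
  | add p q hp hq => simp_all
  | mul_X p v hp => fin_cases v <;> simp_all

lemma PolyFun.evalFG {φ ψ : k → MvPolynomial (Fin 2) k} (hφ : PolyFam φ) (hψ : PolyFam ψ)
    (d₁ d₂ : ℕ) (x : MvPolynomial Avars k) (a b : k) :
    PolyFun fun s => evalPt k a b (evalFG k d₁ d₂ (φ s) (ψ s) x) := by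
  obtain ⟨Φ, hΦ⟩ := hφ
  obtain ⟨Ψ, hΨ⟩ := hψ
  refine ⟨aeval (Sum.elim (fun t : Fin 2 => if t = 0 then Polynomial.C a else Polynomial.C b)
    (Sum.elim (fun j => coeff (Finsupp.single 0 (d₁ - j) + Finsupp.single 1 j) Φ)
      (fun j => coeff (Finsupp.single 0 (d₂ - j) + Finsupp.single 1 j) Ψ))) x, fun s => ?_⟩
  simp only [hΦ, hΨ]
  induction x using MvPolynomial.induction_on with
  | C c => simp [_root_.evalFG, evalPt]
  | add p q hp hq => simp only [map_add, evalPt_add, hp, hq, Polynomial.eval_add]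
  | mul_X p v hp =>
    simp only [map_mul, evalPt_mul, hp, Polynomial.eval_mul]
    congr 1
    rcases v with t | v | v
    · fin_cases t <;> simp [_root_.evalFG, evalPt]
    · simp [_root_.evalFG, evalPt, coeff_map]
    · simp [_root_.evalFG, evalPt, coeff_map]

lemma PolyFun.eventually_ne {φ : k → k} (hφ : PolyFun φ) {s₀ : k} (h : φ s₀ ≠ 0) :
    ∀ᶠ s in cofinite, φ s ≠ 0 := by
  obtain ⟨p, hp⟩ := hφ
  have hp0 : p ≠ 0 := by
    rintro rfl
    simp [hp] at h
  have := Polynomial.finite_setOfPred_isRoot hp0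
  simpa [eventually_cofinite, hp, Polynomial.IsRoot] using this

lemma polyFun_lead {φ ψ : k → MvPolynomial (Fin 2) k} (hφ : PolyFam φ) (hψ : PolyFam ψ)
    (d₁ d₂ : ℕ) (r : ℕ → MvPolynomial Avars k) (lam mu : ℕ → k) (n : ℕ) :
    PolyFun fun s => lead lam mu (evalSeq d₁ d₂ r (φ s) (ψ s)) n :=
  PolyFun.evalFG hφ hψ d₁ d₂ _ _ _

/-! ### A pair of forms at which the leads do not vanish -/

/-- There are distinct points `(1, α_t)` of the projective line avoiding all `(λ_u, μ_u)`. -/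
lemma exists_points [Infinite k] (j : ℕ) (lam mu : ℕ → k)
    (hlm : ∀ u ≤ j, (lam u, mu u) ≠ (0, 0)) :
    ∃ α : ℕ → k, Function.Injective α ∧
      ∀ t, ∀ u ≤ j, evalPt k (lam u) (mu u) (lin 1 (α t)) ≠ 0 := by
  classical
  have hfin : (((Finset.range (j + 1)).image fun u => mu u / lam u : Finset k) : Set k).Finite :=
    Finset.finite_toSet _
  have hinf := hfin.infinite_compl
  refine ⟨fun t => (Set.Infinite.natEmbedding _ hinf t : k),
    Subtype.val_injective.comp (Set.Infinite.natEmbedding _ hinf).injective, fun t u hu h => ?_⟩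
  have hmem := (Set.Infinite.natEmbedding _ hinf t).2
  dsimp only at h
  generalize (Set.Infinite.natEmbedding _ hinf t : k) = x at h hmem
  rw [evalPt_lin, one_mul, sub_eq_zero] at h
  apply hmem
  have hl : lam u ≠ 0 := by
    intro hl
    exact hlm u hu (by rw [h, hl, mul_zero])
  simp only [Finset.coe_image, Set.mem_image, Finset.coe_range, Set.mem_Iio]
  exact ⟨u, by omega, by rw [h]; field_simp⟩

/-- The product of the linear forms vanishing at the points `(1, α_t)`, `t ∈ S`. -/
def linProd (α : ℕ → k) (S : Finset ℕ) : MvPolynomial (Fin 2) k := ∏ t ∈ S, lin 1 (α t)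

lemma isHomogeneous_linProd (α : ℕ → k) (S : Finset ℕ) :
    (linProd α S).IsHomogeneous S.card := by
  have := IsHomogeneous.prod S (fun t => lin 1 (α t)) (fun _ => 1)
    (fun t _ => isHomogeneous_lin 1 (α t))
  simpa [linProd] using this

lemma evalPt_linProd_ne_zero {α : ℕ → k} {a b : k}
    (h : ∀ t, evalPt k a b (lin 1 (α t)) ≠ 0) (S : Finset ℕ) :
    evalPt k a b (linProd α S) ≠ 0 := by
  rw [linProd, evalPt_prod]
  exact Finset.prod_ne_zero_iff.mpr fun t _ => h t

lemma linProd_range_mul_Ico (α : ℕ → k) {m d : ℕ} (h : m ≤ d) :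
    linProd α (Finset.range m) * linProd α (Finset.Ico m d) = linProd α (Finset.range d) :=
  Finset.prod_range_mul_prod_Ico _ h

/-- With `F = ∏_{t < d₁} ℓ_t` fixed, one lowers the degree of `gcd(F, G)` one step at a time: at
each stage the next lead is nonzero, and a generic change of `G` along a line
preserves the leads already known to be nonzero. -/
lemma exists_good [Infinite k] {d₁ d₂ j : ℕ} (hd : d₁ < d₂) (hj : j < d₁) {lam mu : ℕ → k}
    (hlm : ∀ u ≤ j, (lam u, mu u) ≠ (0, 0)) {r q : ℕ → MvPolynomial Avars k}
    (hds : IsDivisionSystem k d₁ d₂ lam mu j r q) {α : ℕ → k} (hα : Function.Injective α)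
    (hαl : ∀ t, ∀ u ≤ j, evalPt k (lam u) (mu u) (lin 1 (α t)) ≠ 0) (n : ℕ) (hn : n ≤ j) :
    ∃ H : MvPolynomial (Fin 2) k, H.IsHomogeneous (d₂ - d₁ + n) ∧
      (∀ t ∈ Finset.Ico (d₁ - n) d₁, evalPt k 1 (α t) H ≠ 0) ∧
      ∀ u < n, lead lam mu (evalSeq d₁ d₂ r (linProd α (Finset.range d₁))
        (linProd α (Finset.range (d₁ - n)) * H)) u ≠ 0 := by
  have hF : (linProd α (Finset.range d₁)).IsHomogeneous d₁ := by
    simpa using isHomogeneous_linProd α (Finset.range d₁)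
  have hF0 : linProd α (Finset.range d₁) ≠ 0 := by
    intro h
    exact evalPt_linProd_ne_zero (fun t => hαl t 0 (by omega)) (Finset.range d₁) (by simp [h])
  induction n with
  | zero => exact ⟨0, isHomogeneous_zero _ _ _, by simp, by simp⟩
  | succ n ih =>
    obtain ⟨H, hH, hHa, hv⟩ := ih (by omega)
    have hPd : (linProd α (Finset.range (d₁ - n))).IsHomogeneous (d₁ - n) := by
      simpa using isHomogeneous_linProd α (Finset.range (d₁ - n))
    have hG : (linProd α (Finset.range (d₁ - n)) * H).IsHomogeneous d₂ := by
      have := hPd.mul hH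
      rwa [show d₁ - n + (d₂ - d₁ + n) = d₂ by omega] at this
    have hvn := (isRemainderChain_evalSeq hds hF hG).lead_ne_zero hlm (n := n) (by omega) (by omega) hPd
      (fun u hu => evalPt_linProd_ne_zero (fun t => hαl t u hu) _)
      (H := H) (L := linProd α (Finset.Ico (d₁ - n) d₁)) (evalFG_ggen hG _)
      ((evalFG_fgen hF _).trans (linProd_range_mul_Ico α (by omega)).symm)
      (by rw [show evalSeq d₁ d₂ r _ _ 1 = _ from evalFG_fgen hF _]; exact hF0)
      (IsRelPrime.prod_left fun t ht => lin_isRelPrime (by simp) (hHa t ht)) hv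
    -- The new cofactor is `ℓ H + s X₀^N`, where `ℓ` is the linear form removed from the gcd.
    set m := d₁ - (n + 1) with hm
    have hmn : d₁ - n = m + 1 := by omega
    set N := d₂ - d₁ + (n + 1) with hN
    let Hs : k → MvPolynomial (Fin 2) k := fun s => lin 1 (α m) * H + C s * X 0 ^ N
    have hfam : PolyFam Hs :=
      ((PolyFam.const _).mul (PolyFam.const _)).add (PolyFam.param.mul (PolyFam.const _))
    have hGfam : PolyFam fun s => linProd α (Finset.range m) * Hs s := (PolyFam.const _).mul hfam
    have hval : ∀ t s, evalPt k 1 (α t) (Hs s)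
        = (α t - α m) * evalPt k 1 (α t) H + s := by
      intro t s
      simp [Hs, evalPt_add, evalPt_mul, evalPt_pow]
    have ev1 : ∀ᶠ s in cofinite, ∀ t ∈ Finset.Ico m d₁, evalPt k 1 (α t) (Hs s) ≠ 0 := by
      rw [Finset.eventually_all]
      intro t ht
      rcases eq_or_ne t m with rfl | htm
      · refine (hfam.evalPt 1 _).eventually_ne (s₀ := 1) ?_
        rw [hval]
        simp
      · refine (hfam.evalPt 1 _).eventually_ne (s₀ := 0) ?_
        rw [hval, add_zero]
        refine mul_ne_zero (sub_ne_zero.mpr (hα.ne htm)) (hHa t ?_)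
        simp only [Finset.mem_Ico] at ht ⊢
        omega
    have ev2 : ∀ᶠ s in cofinite, ∀ u ∈ Finset.range (n + 1),
        lead lam mu (evalSeq d₁ d₂ r (linProd α (Finset.range d₁))
          (linProd α (Finset.range m) * Hs s)) u ≠ 0 := by
      rw [Finset.eventually_all]
      intro u hu
      refine (polyFun_lead (PolyFam.const _) hGfam d₁ d₂ r lam mu u).eventually_ne (s₀ := 0) ?_
      have hG0 : linProd α (Finset.range m) * Hs 0 = linProd α (Finset.range (d₁ - n)) * H := by
        simp only [Hs, hmn, linProd, Finset.prod_range_succ, C_0, zero_mul, add_zero]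
        ring
      rw [hG0]
      rcases Nat.lt_succ_iff_lt_or_eq.mp (Finset.mem_range.mp hu) with h | rfl
      · exact hv u h
      · exact hvn
    obtain ⟨s, hs1, hs2⟩ := (ev1.and ev2).exists
    refine ⟨Hs s, ?_, hs1, fun u hu => hs2 u (Finset.mem_range.mpr hu)⟩
    refine IsHomogeneous.add ?_ ((isHomogeneous_X_pow 0 N).C_mul s)
    have := (isHomogeneous_lin 1 (α m)).mul hH
    rwa [show 1 + (d₂ - d₁ + n) = N by omega] at this

/-- The vanishing of `r_j` at `(P L, P H)` when `P` avoids the points `(λ_u, μ_u)` and the leads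
do not vanish: `P` divides the evaluation of `r_j`, whose degree is smaller than that of `P`. -/
lemma evalFG_eq_zero_of_lead_ne_zero {d₁ d₂ j : ℕ} (hd : d₁ < d₂) (hj : j < d₁)
    {lam mu : ℕ → k} (hlm : ∀ u ≤ j, (lam u, mu u) ≠ (0, 0)) {r q : ℕ → MvPolynomial Avars k}
    (hds : IsDivisionSystem k d₁ d₂ lam mu j r q) {P L H : MvPolynomial (Fin 2) k}
    (hP : P.IsHomogeneous (d₁ - j)) (hL : L.IsHomogeneous j)
    (hH : H.IsHomogeneous (d₂ - d₁ + j))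
    (hPl : ∀ u ≤ j, evalPt k (lam u) (mu u) P ≠ 0)
    (hv : ∀ u < j, lead lam mu (evalSeq d₁ d₂ r (P * L) (P * H)) u ≠ 0) :
    evalFG k d₁ d₂ (P * L) (P * H) (r j) = 0 := by
  have hF : (P * L).IsHomogeneous d₁ := by
    have := hP.mul hL
    rwa [show d₁ - j + j = d₁ by omega] at this
  have hG : (P * H).IsHomogeneous d₂ := by
    have := hP.mul hH
    rwa [show d₁ - j + (d₂ - d₁ + j) = d₂ by omega] at this
  have hdvd : P ∣ evalFG k d₁ d₂ (P * L) (P * H) (r j) :=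
    ((isRemainderChain_evalSeq hds hF hG).dvd_forward hlm hPl
      (by rw [show evalSeq d₁ d₂ r _ _ 0 = _ from evalFG_ggen hG _]; exact dvd_mul_right _ _)
      (by rw [show evalSeq d₁ d₂ r _ _ 1 = _ from evalFG_fgen hF _]; exact dvd_mul_right _ _)
      (j + 1) le_rfl (fun u hu => hv u (by omega))).2
  by_contra hne
  have hP0 : P ≠ 0 := by
    rintro rfl
    exact hne (zero_dvd_iff.mp hdvd)
  have h1 := totalDegree_le_of_dvd_of_isDomain hdvd hne
  have h2 := (isHomogeneous_evalFG (d₁ := d₁) (d₂ := d₂) (F := P * L) (G := P * H)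
    (hds.1 j le_rfl)).totalDegree hne
  rw [hP.totalDegree hP0] at h1
  simp only at h2
  omega

/-- The segment from `A` to `B`, parametrised so that it starts at `s = 0` and ends at `s = 1`. -/
def seg (A B : MvPolynomial (Fin 2) k) (s : k) : MvPolynomial (Fin 2) k := A + C s * (B - A)

lemma seg_zero (A B : MvPolynomial (Fin 2) k) : seg A B 0 = A := by simp [seg]

lemma seg_one (A B : MvPolynomial (Fin 2) k) : seg A B 1 = B := by simp [seg]

lemma polyFam_seg (A B : MvPolynomial (Fin 2) k) : PolyFam (seg A B) :=
  (PolyFam.const _).add (PolyFam.param.mul (PolyFam.const _))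

lemma isHomogeneous_seg {A B : MvPolynomial (Fin 2) k} {d : ℕ} (hA : A.IsHomogeneous d)
    (hB : B.IsHomogeneous d) (s : k) : (seg A B s).IsHomogeneous d :=
  hA.add ((hB.sub hA).C_mul s)

end Helpers

/-- If `(r_i, q_i)_{0 ≤ i ≤ j}` is a division system up to level `j`, then for
all binary forms `P, L, H` of degrees `d₁-j`, `j` and `d₂-d₁+j`, the evaluation of `r_j` at
`(P·L, P·H)` is the zero polynomial. -/
theorem statement2 [IsAlgClosed k] (d₁ d₂ : ℕ) (hd₁ : 1 ≤ d₁) (hd : d₁ < d₂)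
    (j : ℕ) (hj : j ≤ d₁ - 1) (lam mu : ℕ → k)
    (hlm : ∀ u ≤ j, (lam u, mu u) ≠ (0, 0))
    (r q : ℕ → MvPolynomial Avars k)
    (hds : IsDivisionSystem k d₁ d₂ lam mu j r q)
    (P L H : MvPolynomial (Fin 2) k)
    (hP : P.IsHomogeneous (d₁ - j)) (hL : L.IsHomogeneous j)
    (hH : H.IsHomogeneous (d₂ - d₁ + j)) :
    evalFG k d₁ d₂ (P * L) (P * H) (r j) = 0 := by
  have hj' : j < d₁ := by omega
  have : Infinite k := IsAlgClosed.instInfinite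
  obtain ⟨α, hα, hαl⟩ := exists_points j lam mu hlm
  obtain ⟨H₁, hH₁, -, hv⟩ := exists_good hd hj' hlm hds hα hαl j le_rfl
  set P₁ := linProd α (Finset.range (d₁ - j)) with hP₁
  set L₁ := linProd α (Finset.Ico (d₁ - j) d₁) with hL₁
  have hP₁d : P₁.IsHomogeneous (d₁ - j) := by
    simpa using isHomogeneous_linProd α (Finset.range (d₁ - j))
  have hL₁d : L₁.IsHomogeneous j := by
    have := isHomogeneous_linProd α (Finset.Ico (d₁ - j) d₁)
    rwa [Nat.card_Ico, show d₁ - (d₁ - j) = j by omega] at this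
  rw [← linProd_range_mul_Ico α (Nat.sub_le d₁ j)] at hv
  have hFfam : PolyFam fun s => seg P P₁ s * seg L L₁ s := (polyFam_seg _ _).mul (polyFam_seg _ _)
  have hGfam : PolyFam fun s => seg P P₁ s * seg H H₁ s := (polyFam_seg _ _).mul (polyFam_seg _ _)
  have ev1 : ∀ᶠ s in Filter.cofinite, ∀ u ∈ Finset.range (j + 1),
      evalPt k (lam u) (mu u) (seg P P₁ s) ≠ 0 := by
    rw [Finset.eventually_all]
    intro u hu
    refine ((polyFam_seg P P₁).evalPt _ _).eventually_ne (s₀ := 1) ?_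
    rw [seg_one]
    exact evalPt_linProd_ne_zero (fun t => hαl t u (Finset.mem_range_succ_iff.mp hu)) _
  have ev2 : ∀ᶠ s in Filter.cofinite, ∀ u ∈ Finset.range j,
      lead lam mu (evalSeq d₁ d₂ r (seg P P₁ s * seg L L₁ s) (seg P P₁ s * seg H H₁ s)) u ≠ 0 := by
    rw [Finset.eventually_all]
    intro u hu
    refine (polyFun_lead hFfam hGfam d₁ d₂ r lam mu u).eventually_ne (s₀ := 1) ?_
    simp only [seg_one]
    exact hv u (Finset.mem_range.mp hu)
  refine MvPolynomial.funext fun x => ?_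
  have hx : x = fun t : Fin 2 => if t = 0 then x 0 else x 1 := by
    ext t
    fin_cases t <;> simp
  rw [hx, map_zero]
  by_contra hne
  -- A nonzero value at `s = 0` would persist for all but finitely many `s`.
  have ev3 := (PolyFun.evalFG hFfam hGfam d₁ d₂ (r j) (x 0) (x 1)).eventually_ne (s₀ := 0) (by
    simp only [seg_zero]
    exact hne)
  obtain ⟨s, ⟨hs1, hs2⟩, hs3⟩ := ((ev1.and ev2).and ev3).exists
  apply hs3
  rw [evalFG_eq_zero_of_lead_ne_zero hd hj' hlm hds (isHomogeneous_seg hP hP₁d s)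
    (isHomogeneous_seg hL hL₁d s) (isHomogeneous_seg hH hH₁ s)
    (fun u hu => hs1 u (Finset.mem_range_succ_iff.mpr hu))
    (fun u hu => hs2 u (Finset.mem_range.mpr hu)), evalPt_zero]

end
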